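/- Let X be an involutive BE algebra. Then X satisfies the axiom (QW): x→((x∧y)∧(z∧x)) = (x→y)∧(x→z) for all x, y, z, if and only if X satisfies both (QW1): x→(x∧y) = x→y for all x, y, and (QW2): x→(y∧(z∧x)) = (x→y)∧(x→z) for all x, y, z. -/

import Mathlib

/-- A bounded involutive BE algebra. -/
class InvBE (X : Type*) where
  imp : X → X → X
  one : X
  zero : X
  be1 : ∀ x : X, imp x x = one
  be2 : ∀ x : X, imp x one = one
  be3 : ∀ x : X, imp one x = x
  be4 : ∀ x y z : X, imp x (imp y z) = imp y (imp x z)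
  bound : ∀ x : X, imp zero x = one
  dn : ∀ x : X, imp (imp x zero) zero = x

namespace InvBE

variable {X : Type*} [InvBE X]

/-- Negation: `x* = x → 0`. -/
def neg (x : X) : X := imp x zero

/-- `x ∨ y = (x → y) → y`. -/
def sup (x y : X) : X := imp (imp x y) y

/-- `x ∧ y = ((x* → y*) → y*)*`. -/
def inf (x y : X) : X := neg (imp (imp (neg x) (neg y)) (neg y))

/-- `x ≤ y` iff `x → y = 1`. -/
def le (x y : X) : Prop := imp x y = one

/-- `x ≤_Q y` iff `x = x ∧ y`. -/
def leQ (x y : X) : Prop := x = inf x y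

end InvBE

/-!
The meet `y ∧ w` depends on `y` only through `w → y`, and contraposition together with exchange
gives `(z ∧ x) → t = (x → z) → (x → t)`. Hence `y ∧ (z ∧ x)` depends on `y` only through `x → y`.
Under (QW1) the elements `x ∧ y` and `y` have the same implication from `x`, so the left-hand sides
of (QW) and (QW2) agree, and it remains to derive (QW1) from (QW). Setting `y = x` in (QW) gives
`x → (z ∧ x) = x → z`, setting `z = 1` gives `x → ((x ∧ y) ∧ x) = x → y`, and the former at
`z = x ∧ y` turns the latter into (QW1).
-/

namespace InvBE

/-- The law (QW), as a property of the algebra `X`. -/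
def QW (X : Type*) [InvBE X] : Prop :=
  ∀ x y z : X, imp x (inf (inf x y) (inf z x)) = inf (imp x y) (imp x z)

/-- The law (QW1), one of the two laws into which (QW) splits. -/
def QW1 (X : Type*) [InvBE X] : Prop :=
  ∀ x y : X, imp x (inf x y) = imp x y

/-- The law (QW2), one of the two laws into which (QW) splits. -/
def QW2 (X : Type*) [InvBE X] : Prop :=
  ∀ x y z : X, imp x (inf y (inf z x)) = inf (imp x y) (imp x z)

variable {X : Type*} [InvBE X]

theorem neg_neg (x : X) : neg (neg x) = x := dn x

theorem neg_one : neg (one : X) = zero := be3 zero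

theorem imp_neg_comm (x y : X) : imp x (neg y) = imp y (neg x) := be4 x y zero

theorem neg_imp_neg (x y : X) : imp (neg x) (neg y) = imp y x := by
  rw [imp_neg_comm, neg_neg]

theorem inf_eq_neg_imp (x y : X) : inf x y = neg (imp (imp y x) (neg y)) := by
  rw [inf, neg_imp_neg]

theorem inf_imp (x y z : X) : imp (inf x y) z = imp (imp y x) (imp y z) :=
  calc imp (inf x y) z
    _ = imp (neg z) (imp (imp y x) (neg y)) := by
      rw [← neg_imp_neg, inf_eq_neg_imp, neg_neg]
    _ = imp (imp y x) (imp (neg z) (neg y)) := be4 _ _ _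
    _ = imp (imp y x) (imp y z) := by rw [neg_imp_neg]

theorem inf_le_right (x y : X) : le (inf x y) y := by
  rw [le, inf_imp, be1, be2]

theorem inf_eq_right_of_le {x y : X} (h : le y x) : inf x y = y := by
  rw [inf_eq_neg_imp, h, be3, neg_neg]

theorem inf_self (x : X) : inf x x = x := inf_eq_right_of_le (be1 x)

theorem one_inf (x : X) : inf one x = x := inf_eq_right_of_le (be2 x)

theorem inf_one (x : X) : inf x one = x := by
  rw [inf_eq_neg_imp, be3, neg_one]
  exact neg_neg x

theorem inf_inf_self_right (x y : X) : inf y (inf x y) = inf x y :=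
  inf_eq_right_of_le (inf_le_right x y)

theorem inf_congr_of_imp_eq {x y w : X} (h : imp w x = imp w y) : inf x w = inf y w := by
  rw [inf_eq_neg_imp, inf_eq_neg_imp, h]

theorem inf_inf_congr_of_imp_eq {x y w : X} (h : imp w x = imp w y) (z : X) :
    inf x (inf z w) = inf y (inf z w) :=
  inf_congr_of_imp_eq <| by rw [inf_imp, inf_imp, h]

theorem QW.imp_inf_self_right (h : QW X) (x z : X) : imp x (inf z x) = imp x z :=
  calc imp x (inf z x)
    _ = imp x (inf (inf x x) (inf z x)) := by rw [inf_self, inf_inf_self_right]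
    _ = inf (imp x x) (imp x z) := h x x z
    _ = imp x z := by rw [be1, one_inf]

theorem QW.qw1 (h : QW X) : QW1 X := fun x y ↦
  calc imp x (inf x y)
    _ = imp x (inf (inf x y) x) := (h.imp_inf_self_right x (inf x y)).symm
    _ = imp x (inf (inf x y) (inf one x)) := by rw [one_inf]
    _ = inf (imp x y) (imp x one) := h x y one
    _ = imp x y := by rw [be2, inf_one]

theorem QW1.inf_inf_inf (h : QW1 X) (x y z : X) :
    inf (inf x y) (inf z x) = inf y (inf z x) :=
  inf_inf_congr_of_imp_eq (h x y) z

theorem QW1.qw_iff_qw2 (h : QW1 X) : QW X ↔ QW2 X := by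
  simp only [QW, QW2, h.inf_inf_inf]

end InvBE

open InvBE in
theorem stmt_4 {X : Type*} [InvBE X] :
    (∀ x y z : X, imp x (inf (inf x y) (inf z x)) = inf (imp x y) (imp x z)) ↔
    ((∀ x y : X, imp x (inf x y) = imp x y) ∧
     (∀ x y z : X, imp x (inf y (inf z x)) = inf (imp x y) (imp x z))) := by
  change QW X ↔ QW1 X ∧ QW2 X
  constructor
  · intro qw
    exact ⟨qw.qw1, qw.qw1.qw_iff_qw2.mp qw⟩
  · rintro ⟨qw1, qw2⟩
    exact qw1.qw_iff_qw2.mpr qw2
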